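/- Let P ⊆ ℝⁿ be a Delone set of finite local complexity and let ψ : P → ℝᵐ be a function such that for every h ∈ P − P, the difference function Δ_h ψ : P ∩ (P − h) → ℝᵐ, Δ_h ψ(x) = ψ(x + h) − ψ(x), is strongly P-equivariant. Then there exists a smooth (C^∞) function φ : ℝⁿ → ℝᵐ whose restriction to P equals ψ and whose derivative map dφ is strongly P-equivariant. -/

import Mathlib

open Metric Set

noncomputable section

/-- Euclidean space ℝⁿ. -/
abbrev Euc (n : ℕ) := EuclideanSpace ℝ (Fin n)

/-- The translate `P - x = {p - x : p ∈ P}`. -/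
def shiftSet {n : ℕ} (P : Set (Euc n)) (x : Euc n) : Set (Euc n) :=
  (fun p => p - x) '' P

/-- The `r`-patch of `P` around `x`: `B_r[P - x] = B(0,r) ∩ (P - x)`. -/
def patch {n : ℕ} (P : Set (Euc n)) (r : ℝ) (x : Euc n) : Set (Euc n) :=
  ball (0 : Euc n) r ∩ shiftSet P x

/-- `P` is uniformly discrete: there is a positive minimal distance between points. -/
def UnifDiscrete {n : ℕ} (P : Set (Euc n)) : Prop :=
  ∃ δ > 0, ∀ p ∈ P, ∀ q ∈ P, p ≠ q → δ ≤ ‖p - q‖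

/-- `P` is relatively dense: every ball of radius `R` contains a point of `P`. -/
def RelDense {n : ℕ} (P : Set (Euc n)) : Prop :=
  ∃ R > 0, ∀ x : Euc n, ∃ p ∈ P, ‖p - x‖ < R

/-- `P` has finite local complexity: for each `r > 0`, only finitely many `r`-patches
around points of `P`. -/
def FLC {n : ℕ} (P : Set (Euc n)) : Prop :=
  ∀ r > 0, {s : Set (Euc n) | ∃ x ∈ P, s = patch P r x}.Finite

/-- `f` is `P`-equivariant with range `R`. -/
def EquivRange {n : ℕ} {F : Type*} (P : Set (Euc n)) (R : ℝ) (f : Euc n → F) : Prop :=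
  ∀ x y : Euc n, patch P R x = patch P R y → f x = f y

/-- `f` is strongly `P`-equivariant: `P`-equivariant with some finite range `R > 0`. -/
def StrongEquiv {n : ℕ} {F : Type*} (P : Set (Euc n)) (f : Euc n → F) : Prop :=
  ∃ R > 0, EquivRange P R f

/-- `f`, viewed as a function on the subset `Q`, is `P`-equivariant with range `R`. -/
def EquivRangeOn {n : ℕ} {F : Type*} (P Q : Set (Euc n)) (R : ℝ) (f : Euc n → F) : Prop :=
  ∀ x ∈ Q, ∀ y ∈ Q, patch P R x = patch P R y → f x = f y

/-- `f`, viewed as a function on the subset `Q`, is strongly `P`-equivariant. -/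
def StrongEquivOn {n : ℕ} {F : Type*} (P Q : Set (Euc n)) (f : Euc n → F) : Prop :=
  ∃ R > 0, EquivRangeOn P Q R f

/-- `Q` is locally derivable from `P`. -/
def LocallyDerivable {n : ℕ} (P Q : Set (Euc n)) : Prop :=
  ∃ R > 0, ∀ x y : Euc n, patch P R x = patch P R y →
    ({0} : Set (Euc n)) ∩ shiftSet Q x = ({0} : Set (Euc n)) ∩ shiftSet Q y

/-- Hypothesis (H): for every `r > 0` there is `r' > 0` such that for all `x`,
`B(φ(x), r) ∩ φ(P) ⊆ φ(B(x, r') ∩ P)`. -/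
def HypoH {n : ℕ} (P : Set (Euc n)) (φ : Euc n → Euc n) : Prop :=
  ∀ r > 0, ∃ r' > 0, ∀ x : Euc n, ball (φ x) r ∩ (φ '' P) ⊆ φ '' (ball x r' ∩ P)

/-- The pattern metric `D` on closed subsets of ℝⁿ. -/
def patternDist {n : ℕ} (A B : Set (Euc n)) : ℝ :=
  sInf {ε : ℝ | 0 < ε ∧ Metric.hausdorffDist
    ((ball (0 : Euc n) (1 / ε) ∩ A) ∪ sphere (0 : Euc n) (1 / ε))
    ((ball (0 : Euc n) (1 / ε) ∩ B) ∪ sphere (0 : Euc n) (1 / ε)) ≤ ε}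

/-- A continuous `f : ℝⁿ → ℝⁿ` is weakly `P`-equivariant if it is uniformly approximated
by strongly `P`-equivariant continuous functions. -/
def WeakEquiv {n : ℕ} (P : Set (Euc n)) (f : Euc n → Euc n) : Prop :=
  ∀ ε > 0, ∃ g : Euc n → Euc n, Continuous g ∧ StrongEquiv P g ∧ ∀ x : Euc n, ‖f x - g x‖ < ε

/-- `P` is aperiodic: the only translation fixing `P` is `0`. -/
def IsAperiodicSet {n : ℕ} (P : Set (Euc n)) : Prop :=
  ∀ x : Euc n, shiftSet P x = P → x = 0


lemma mem_patch_iff {n : ℕ} {P : Set (Euc n)} {r : ℝ} {x u : Euc n} :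
    u ∈ patch P r x ↔ ‖u‖ < r ∧ x + u ∈ P := by
  simp only [patch, shiftSet, mem_inter_iff, mem_ball_zero_iff, mem_image]
  refine and_congr_right fun _ => ⟨?_, fun h => ⟨x + u, h, by simp⟩⟩
  rintro ⟨p, hp, rfl⟩
  simpa using hp

/-- Equal patches around `x` and `y` give equal smaller patches around nearby points. -/
lemma patch_add_eq {n : ℕ} {P : Set (Euc n)} {r s : ℝ} {x y w : Euc n}
    (hw : r + ‖w‖ ≤ s) (h : patch P s x = patch P s y) :
    patch P r (x + w) = patch P r (y + w) := by
  ext u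
  have hu := Set.ext_iff.1 h (w + u)
  simp only [mem_patch_iff, add_assoc] at hu ⊢
  refine and_congr_right fun hur => ?_
  have : ‖w + u‖ < s := by linarith [norm_add_le w u]
  simpa [this] using hu

lemma patch_mono {n : ℕ} {P : Set (Euc n)} {r s : ℝ} (hrs : r ≤ s) {x y : Euc n}
    (h : patch P s x = patch P s y) : patch P r x = patch P r y := by
  simpa using patch_add_eq (w := 0) (by simpa using hrs) h

lemma UnifDiscrete.finite_inter {n : ℕ} {P : Set (Euc n)} (hP : UnifDiscrete P)
    {K : Set (Euc n)} (hK : Bornology.IsBounded K) : (K ∩ P).Finite := by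
  obtain ⟨δ, hδ, hsep⟩ := hP
  have hpw : P.Pairwise fun p q => δ ≤ dist p q := fun p hp q hq hne => by
    simpa only [dist_eq_norm] using hsep p hp q hq hne
  refine Metric.finite_isBounded_inter_isClosed ?_ hK (isClosed_of_pairwise_le_dist hδ hpw)
  refine ⟨DiscreteTopology.of_forall_le_dist hδ fun p q hne => ?_⟩
  exact hpw p.2 q.2 (Subtype.coe_injective.ne hne)

/-- Only finitely many difference vectors of bounded length occur in a uniformly discrete set of
finite local complexity. -/
lemma FLC.finite_differences {n : ℕ} {P : Set (Euc n)} (hP : UnifDiscrete P) (hF : FLC P)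
    {L : ℝ} (hL : 0 < L) :
    {h : Euc n | ‖h‖ < L ∧ ∃ p ∈ P, ∃ q ∈ P, h = p - q}.Finite := by
  refine ((hF L hL).sUnion ?_).subset ?_
  · rintro _ ⟨x, -, rfl⟩
    refine ((hP.finite_inter (isBounded_ball (x := x) (r := L))).image (· - x)).subset ?_
    intro u hu
    rw [mem_patch_iff] at hu
    exact ⟨x + u, ⟨by simpa using hu.1, hu.2⟩, by simp⟩
  · rintro _ ⟨hlt, p, hp, q, hq, rfl⟩
    exact ⟨_, ⟨q, hq, rfl⟩, mem_patch_iff.2 ⟨hlt, by simpa using hp⟩⟩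

/-- The sum over `p ∈ P` of the translated profiles `g (z - p)` weighted by `F p`. -/
def profileSum {n : ℕ} {E : Type*} [AddCommGroup E] [Module ℝ E] (P : Set (Euc n))
    (g : Euc n → ℝ) (F : Euc n → E) (z : Euc n) : E :=
  ∑ᶠ p, g (z - p) • P.indicator F p

section profileSum

variable {n : ℕ} {E : Type*} [NormedAddCommGroup E] [NormedSpace ℝ E] {P : Set (Euc n)}
  {g : Euc n → ℝ} {T : ℝ}

lemma UnifDiscrete.locallyFinite_profile (hP : UnifDiscrete P)
    (hg : ∀ u, T ≤ ‖u‖ → g u = 0) (F : Euc n → E) :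
    LocallyFinite fun p => Function.support fun z => g (z - p) • P.indicator F p := by
  intro x
  refine ⟨ball x 1, ball_mem_nhds x one_pos,
    (hP.finite_inter (isBounded_ball (x := x) (r := T + 1))).subset ?_⟩
  rintro p ⟨z, hz, hzx⟩
  simp only [Function.mem_support, ne_eq, smul_eq_zero, not_or] at hz
  refine ⟨?_, Set.mem_of_indicator_ne_zero hz.2⟩
  have h1 : ‖z - p‖ < T := lt_of_not_ge fun h => hz.1 (hg _ h)
  rw [← dist_eq_norm, dist_comm] at h1
  rw [mem_ball] at hzx ⊢
  linarith [dist_triangle p z x]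

lemma UnifDiscrete.hasFiniteSupport_profile (hP : UnifDiscrete P)
    (hg : ∀ u, T ≤ ‖u‖ → g u = 0) (F : Euc n → E) (z : Euc n) :
    Function.HasFiniteSupport fun p => g (z - p) • P.indicator F p :=
  (hP.locallyFinite_profile hg F).point_finite z

lemma UnifDiscrete.contDiff_profileSum (hP : UnifDiscrete P)
    (hg : ∀ u, T ≤ ‖u‖ → g u = 0) (hgs : ContDiff ℝ (⊤ : ℕ∞) g) (F : Euc n → E) :
    ContDiff ℝ (⊤ : ℕ∞) (profileSum P g F) := by
  rw [← contMDiff_iff_contDiff]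
  refine contMDiff_finsum (fun p => ?_) (hP.locallyFinite_profile hg F)
  rw [contMDiff_iff_contDiff]
  exact (hgs.comp (contDiff_id.sub contDiff_const)).smul contDiff_const

lemma UnifDiscrete.profileSum_sub_const (hP : UnifDiscrete P)
    (hg : ∀ u, T ≤ ‖u‖ → g u = 0) (F : Euc n → E) (c : E) (z : Euc n) :
    profileSum P g (fun p => F p - c) z =
      profileSum P g F z - profileSum P g (fun _ => (1 : ℝ)) z • c := by
  have h1 := hP.hasFiniteSupport_profile hg F z
  have h2 := hP.hasFiniteSupport_profile hg (fun _ => c) z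
  have h3 := hP.hasFiniteSupport_profile hg (fun _ => (1 : ℝ)) z
  simp only [profileSum]
  rw [finsum_smul' h3]
  have key : ∀ p, (g (z - p) • P.indicator (fun _ => (1 : ℝ)) p) • c =
      g (z - p) • P.indicator (fun _ => c) p := fun p => by
    by_cases hp : p ∈ P <;> simp [hp]
  simp only [key]
  rw [← finsum_sub_distrib h1 h2]
  refine finsum_congr fun p => ?_
  by_cases hp : p ∈ P <;> simp [hp, smul_sub]

/-- A profile narrower than the minimal distance of `P` interpolates exactly on `P`. -/
lemma profileSum_apply_of_mem (hP : ∀ p ∈ P, ∀ q ∈ P, p ≠ q → T ≤ ‖p - q‖)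
    (hg : ∀ u, T ≤ ‖u‖ → g u = 0) (hg0 : g 0 = 1) (F : Euc n → E) {q : Euc n} (hq : q ∈ P) :
    profileSum P g F q = F q := by
  rw [profileSum, finsum_eq_single _ q]
  · simp [hq, hg0]
  · intro p hpq
    by_cases hp : p ∈ P
    · rw [hg _ (hP q hq p hp hpq.symm), zero_smul]
    · simp [hp]

/-- `profileSum` near `x` only depends on the restriction of `P` and `F` to a ball about `x`. -/
lemma profileSum_add_congr (hg : ∀ u, T ≤ ‖u‖ → g u = 0) {F G : Euc n → E} {x y v : Euc n}
    (hv : ‖v‖ < 1) (hP : ∀ u : Euc n, ‖u‖ < T + 1 → (x + u ∈ P ↔ y + u ∈ P))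
    (hFG : ∀ u : Euc n, ‖u‖ < T + 1 → x + u ∈ P → F (x + u) = G (y + u)) :
    profileSum P g F (x + v) = profileSum P g G (y + v) := by
  simp only [profileSum]
  rw [← finsum_comp_equiv (Equiv.addLeft x),
    ← finsum_comp_equiv (Equiv.addLeft y) (f := fun p => g (y + v - p) • P.indicator G p)]
  refine finsum_congr fun u => ?_
  simp only [Equiv.coe_addLeft, add_sub_add_left_eq_sub]
  by_cases hu : ‖u‖ < T + 1
  · by_cases hx : x + u ∈ P
    · simp [hx, (hP u hu).1 hx, hFG u hu hx]
    · simp [hx, mt (hP u hu).2 hx]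
  · rw [hg (v - u)]
    · simp
    · linarith [norm_sub_norm_le u v, norm_sub_rev u v]

end profileSum

/-- The differences `ψ p - ψ q` of bounded displacement are determined by the patch around a point
near `q`, with one range for all displacements of length less than `L`. -/
lemma exists_uniform_range {n m : ℕ} {P : Set (Euc n)} (hUD : UnifDiscrete P) (hFLC : FLC P)
    {ψ : Euc n → Euc m}
    (hΔ : ∀ h : Euc n, (∃ p ∈ P, ∃ q ∈ P, h = p - q) →
      StrongEquivOn P (P ∩ shiftSet P h) (fun x => ψ (x + h) - ψ x))
    {L : ℝ} (hL : 0 < L) :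
    ∃ M : ℝ, ∀ h : Euc n, ‖h‖ < L → ∀ q ∈ P, ∀ q' ∈ P, q + h ∈ P → q' + h ∈ P →
      patch P M q = patch P M q' → ψ (q + h) - ψ q = ψ (q' + h) - ψ q' := by
  choose! r hr0 hr using hΔ
  obtain ⟨M, hM⟩ := ((hFLC.finite_differences hUD hL).image r).bddAbove
  refine ⟨M, fun h hh q hq q' hq' hqh hqh' heq => ?_⟩
  have hd : ∃ p ∈ P, ∃ q ∈ P, h = p - q := ⟨q + h, hqh, q, hq, by simp⟩
  exact hr h hd q ⟨hq, q + h, hqh, by simp⟩ q' ⟨hq', q' + h, hqh', by simp⟩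
    (patch_mono (hM ⟨h, ⟨hh, hd⟩, rfl⟩) heq)

/-- Smooth interpolation of `ψ` from `P`: the narrow profile `β` forces the values at `P`, and the
wide profile `ρ` fills in a normalized average elsewhere. -/
def interpolation {n m : ℕ} (P : Set (Euc n)) (β ρ : Euc n → ℝ) (ψ : Euc n → Euc m)
    (z : Euc n) : Euc m :=
  profileSum P β ψ z + ((1 - profileSum P β (fun _ => (1 : ℝ)) z) *
    (profileSum P ρ (fun _ => (1 : ℝ)) z)⁻¹) • profileSum P ρ ψ z

theorem stmt3 {n m : ℕ} (P : Set (Euc n))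
    (hUD : UnifDiscrete P) (hRD : RelDense P) (hFLC : FLC P)
    (ψ : Euc n → Euc m)
    (hΔ : ∀ h : Euc n, (∃ p ∈ P, ∃ q ∈ P, h = p - q) →
      StrongEquivOn P (P ∩ shiftSet P h) (fun x => ψ (x + h) - ψ x)) :
    ∃ φ : Euc n → Euc m, ContDiff ℝ (⊤ : ℕ∞) φ ∧ (∀ p ∈ P, φ p = ψ p) ∧
      StrongEquiv P (fderiv ℝ φ) := by
  obtain ⟨δ, hδ, hsep⟩ := id hUD
  obtain ⟨R, hR, hdense⟩ := hRD
  let β : ContDiffBump (0 : Euc n) := ⟨δ / 2, δ, by linarith, by linarith⟩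
  let ρ : ContDiffBump (0 : Euc n) := ⟨R, R + 1, hR, by linarith⟩
  have hβ : ∀ u : Euc n, δ ≤ ‖u‖ → β u = 0 := fun u hu => β.zero_of_le_dist (by simpa using hu)
  have hρ : ∀ u : Euc n, R + 1 ≤ ‖u‖ → ρ u = 0 := fun u hu =>
    ρ.zero_of_le_dist (by simpa using hu)
  have hβ0 : β 0 = 1 := β.one_of_mem_closedBall (by simpa using β.rIn_pos.le)
  have hβP := fun q hq => profileSum_apply_of_mem (E := Euc m) hsep hβ hβ0 ψ (q := q) hq
  have hβ1 := fun q hq => profileSum_apply_of_mem hsep hβ hβ0 (fun _ => (1 : ℝ)) (q := q) hq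
  have hN : ∀ z, 0 < profileSum P ρ (fun _ => (1 : ℝ)) z := by
    intro z
    have hnonneg : ∀ p, 0 ≤ ρ (z - p) • P.indicator (fun _ => (1 : ℝ)) p := fun p =>
      mul_nonneg ρ.nonneg (indicator_nonneg (fun _ _ => zero_le_one) p)
    refine finsum_pos hnonneg ?_ (hUD.hasFiniteSupport_profile hρ _ z)
    obtain ⟨p, hp, hpz⟩ := hdense z
    refine ⟨p, ?_⟩
    have : 0 < ρ (z - p) := ρ.pos_of_mem_ball (by
      rw [mem_ball_zero_iff, norm_sub_rev]; exact hpz.trans (by simp [ρ]))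
    simpa [hp] using this
  have hsub : ∀ (c : Euc m) (z : Euc n),
      interpolation P β ρ (fun p => ψ p - c) z = interpolation P β ρ ψ z - c := by
    intro c z
    have := (hN z).ne'
    simp only [interpolation, hUD.profileSum_sub_const hβ, hUD.profileSum_sub_const hρ]
    match_scalars <;> field_simp
    ring
  refine ⟨interpolation P β ρ ψ, ?_, fun q hq => ?_, ?_⟩
  · have h1 := hUD.contDiff_profileSum hβ β.contDiff ψ
    have h2 := hUD.contDiff_profileSum hβ β.contDiff fun _ => (1 : ℝ)
    have h3 := hUD.contDiff_profileSum hρ ρ.contDiff fun _ => (1 : ℝ)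
    have h4 := hUD.contDiff_profileSum hρ ρ.contDiff ψ
    exact h1.add (((contDiff_const.sub h2).mul (h3.inv fun z => (hN z).ne')).smul h4)
  · simp [interpolation, hβP q hq, hβ1 q hq]
  let T := max δ (R + 1)
  have hT : 0 < T := lt_max_of_lt_left hδ
  obtain ⟨M, hM⟩ := exists_uniform_range hUD hFLC hΔ (L := T + 1 + R) (by linarith)
  let S := max (M + R) (T + 1 + R)
  have hS1 : M + R ≤ S := le_max_left _ _
  have hS2 : T + 1 + R ≤ S := le_max_right _ _
  refine ⟨S, by linarith, fun x y hxy => ?_⟩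
  have hmem : ∀ u : Euc n, ‖u‖ < S → (x + u ∈ P ↔ y + u ∈ P) := fun u hu => by
    have := Set.ext_iff.1 hxy u
    simpa [mem_patch_iff, hu] using this
  obtain ⟨q, hq, hqx⟩ := hdense x
  obtain ⟨w, rfl⟩ : ∃ w, q = x + w := ⟨q - x, by simp⟩
  rw [add_sub_cancel_left] at hqx
  have hqy : y + w ∈ P := (hmem w (by linarith)).1 hq
  have hpatch : patch P M (x + w) = patch P M (y + w) := patch_add_eq (by linarith) hxy
  have hψ : ∀ u : Euc n, ‖u‖ < T + 1 → x + u ∈ P →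
      ψ (x + u) - ψ (x + w) = ψ (y + u) - ψ (y + w) := fun u hu hxu => by
    have hxe : x + w + (u - w) = x + u := by abel
    have hye : y + w + (u - w) = y + u := by abel
    have := hM (u - w) (by linarith [norm_sub_le u w]) (x + w) hq (y + w) hqy (by rwa [hxe])
      (by rw [hye]; exact (hmem u (by linarith)).1 hxu) hpatch
    rwa [hxe, hye] at this
  have hlocal : ∀ v : Euc n, ‖v‖ < 1 →
      interpolation P β ρ ψ (x + v) - ψ (x + w) =
        interpolation P β ρ ψ (y + v) - ψ (y + w) := by
    intro v hv
    have hβT : ∀ u : Euc n, T ≤ ‖u‖ → β u = 0 := fun u hu => hβ u ((le_max_left _ _).trans hu)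
    have hρT : ∀ u : Euc n, T ≤ ‖u‖ → ρ u = 0 := fun u hu => hρ u ((le_max_right _ _).trans hu)
    have hmemT : ∀ u : Euc n, ‖u‖ < T + 1 → (x + u ∈ P ↔ y + u ∈ P) := fun u hu =>
      hmem u (by linarith)
    rw [← hsub, ← hsub]
    simp only [interpolation]
    rw [profileSum_add_congr hβT hv hmemT (G := fun p => ψ p - ψ (y + w)) hψ,
      profileSum_add_congr hρT hv hmemT (G := fun p => ψ p - ψ (y + w)) hψ,
      profileSum_add_congr hβT hv hmemT (F := fun _ => (1 : ℝ)) (G := fun _ => 1)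
        fun _ _ _ => rfl,
      profileSum_add_congr hρT hv hmemT (F := fun _ => (1 : ℝ)) (G := fun _ => 1)
        fun _ _ _ => rfl]
  have hev : (fun v => interpolation P β ρ ψ (x + v) - ψ (x + w)) =ᶠ[nhds 0]
      fun v => interpolation P β ρ ψ (y + v) - ψ (y + w) := by
    filter_upwards [ball_mem_nhds (0 : Euc n) one_pos] with v hv
    exact hlocal v (by simpa using hv)
  have hfd := hev.fderiv_eq (𝕜 := ℝ)
  simpa [fderiv_sub_const, fderiv_comp_add_left] using hfd
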